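/- arXiv:1003.2584 — 2 statements merged into one kernel-verified Lean document; each statement's English description precedes it below -/
import Mathlib

section
/- A countable discrete group G is amenable if and only if there exists a continuous linear functional m on the quotient space ℓ∞(G)/ℝ such that for every g ∈ G and every f ∈ ℓ∞(G), m([h ↦ f(gh)] − [f]) = f(g) − f(e). (This condition says exactly that the Johnson class, i.e. the class of the cocycle g ↦ J_g, vanishes in H¹(G, (ℓ∞(G)/ℝ)*).) -/
noncomputable section
open scoped ENNReal

/-- `ℓ∞(G)`: the Banach space of bounded real-valued functions on `G` with the sup norm. -/
abbrev Linf (G : Type*) : Type _ := ↥(lp (fun _ : G => ℝ) ∞)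

/-- The left-translation action of `G` on `ℓ∞(G)`: `(g · f)(h) = f (g⁻¹ h)`. -/
def ltrans {G : Type*} [Group G] (g : G) (f : Linf G) : Linf G :=
  ⟨fun h => f (g⁻¹ * h),
    memℓp_infty ⟨‖f‖, by
      rintro x ⟨h, rfl⟩
      exact lp.norm_apply_le_norm ENNReal.top_ne_zero f (g⁻¹ * h)⟩⟩

/-- The constant function `1` as an element of `ℓ∞(G)`. -/
def lone (G : Type*) : Linf G :=
  ⟨fun _ => 1, memℓp_infty ⟨1, by rintro x ⟨h, rfl⟩; simp⟩⟩

/-- The subspace of constant functions in `ℓ∞(G)` (the span of the constant function `1`). -/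
def Consts (G : Type*) : Submodule ℝ (Linf G) := Submodule.span ℝ {lone G}

/-- Right translation: `(rt g f)(h) = f (g h)`, i.e. the function `h ↦ f (g h)`. -/
def rt {G : Type*} [Group G] (g : G) (f : Linf G) : Linf G :=
  ⟨fun h => f (g * h),
    memℓp_infty ⟨‖f‖, by
      rintro x ⟨h, rfl⟩
      exact lp.norm_apply_le_norm ENNReal.top_ne_zero f (g * h)⟩⟩

theorem aux_ext {G : Type*} {f g : Linf G} (h : ∀ x, f x = g x) : f = g :=
  lp.ext (funext h)

theorem aux_abs_le {G : Type*} (f : Linf G) (x : G) : |f x| ≤ ‖f‖ :=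
  lp.norm_apply_le_norm ENNReal.top_ne_zero f x

theorem aux_norm_le {G : Type*} {f : Linf G} {C : ℝ} (hC : 0 ≤ C) (h : ∀ x, |f x| ≤ C) :
    ‖f‖ ≤ C := lp.norm_le_of_forall_le hC h

theorem aux_add {G : Type*} (f g : Linf G) (x : G) : (f + g) x = f x + g x := rfl
theorem aux_sub {G : Type*} (f g : Linf G) (x : G) : (f - g) x = f x - g x := rfl
theorem aux_smul {G : Type*} (c : ℝ) (f : Linf G) (x : G) : (c • f) x = c * f x := rfl
theorem aux_zero {G : Type*} (x : G) : (0 : Linf G) x = 0 := rfl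
theorem aux_lone {G : Type*} (x : G) : (lone G) x = 1 := rfl
theorem aux_ltrans {G : Type*} [Group G] (g : G) (f : Linf G) (x : G) :
    (ltrans g f) x = f (g⁻¹ * x) := rfl
theorem aux_rt {G : Type*} [Group G] (g : G) (f : Linf G) (x : G) :
    (rt g f) x = f (g * x) := rfl

/-- Pointwise minimum. -/
def lmin {G : Type*} (f g : Linf G) : Linf G :=
  ⟨fun x => min (f x) (g x), memℓp_infty ⟨max ‖f‖ ‖g‖, by
    rintro _ ⟨x, rfl⟩
    exact abs_min_le_max_abs_abs.trans (max_le_max (aux_abs_le f x) (aux_abs_le g x))⟩⟩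

theorem aux_lmin {G : Type*} (f g : Linf G) (x : G) : (lmin f g) x = min (f x) (g x) := rfl

/-- Evaluation at a point. -/
def levl {G : Type*} (x : G) : Linf G →L[ℝ] ℝ :=
  LinearMap.mkContinuous
    { toFun := fun f => f x, map_add' := fun _ _ => rfl, map_smul' := fun _ _ => rfl } 1
    (fun f => by rw [one_mul]; exact aux_abs_le f x)

theorem levl_apply {G : Type*} (x : G) (f : Linf G) : levl x f = f x := rfl

/-- The order interval `[0, f]`. -/
def lint {G : Type*} (f : Linf G) : Set (Linf G) := {h | ∀ x, 0 ≤ h x ∧ h x ≤ f x}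

/-- Positive part of a functional on the positive cone. -/
def ppart {G : Type*} (ν : Linf G →L[ℝ] ℝ) (f : Linf G) : ℝ := sSup (ν '' lint f)

section
variable {G : Type*} (ν : Linf G →L[ℝ] ℝ)

theorem lint_bound (f h : Linf G) (hh : h ∈ lint f) : ν h ≤ ‖ν‖ * ‖f‖ := by
  have h1 : ‖h‖ ≤ ‖f‖ := aux_norm_le (norm_nonneg _) fun x => by
    rw [abs_of_nonneg (hh x).1]
    exact (hh x).2.trans ((le_abs_self _).trans (aux_abs_le f x))
  exact (le_abs_self _).trans ((ν.le_opNorm h).trans (by gcongr))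

theorem le_ppart (f h : Linf G) (hh : h ∈ lint f) : ν h ≤ ppart ν f := by
  refine le_csSup ⟨‖ν‖ * ‖f‖, ?_⟩ ⟨h, hh, rfl⟩
  rintro _ ⟨k, hk, rfl⟩
  exact lint_bound ν f k hk

theorem ppart_le (f : Linf G) (hf : ∀ x, 0 ≤ f x) (C : ℝ) (h : ∀ k ∈ lint f, ν k ≤ C) :
    ppart ν f ≤ C := by
  refine csSup_le ⟨ν 0, 0, fun x => ⟨le_rfl, hf x⟩, rfl⟩ ?_
  rintro _ ⟨k, hk, rfl⟩
  exact h k hk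

theorem ppart_nonneg (f : Linf G) (hf : ∀ x, 0 ≤ f x) : 0 ≤ ppart ν f := by
  have := le_ppart ν f 0 (fun x => ⟨le_rfl, hf x⟩)
  simpa using this

theorem ppart_add (f g : Linf G) (hf : ∀ x, 0 ≤ f x) (hg : ∀ x, 0 ≤ g x) :
    ppart ν (f + g) = ppart ν f + ppart ν g := by
  apply le_antisymm
  · refine ppart_le ν _ (fun x => add_nonneg (hf x) (hg x)) _ fun k hk => ?_
    have h1 : lmin k f ∈ lint f := fun x => by
      rw [aux_lmin]; exact ⟨le_min (hk x).1 (hf x), min_le_right _ _⟩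
    have h2 : k - lmin k f ∈ lint g := fun x => by
      have := (hk x).2
      rw [aux_add] at this
      rw [aux_sub, aux_lmin]
      have := hg x
      rcases min_cases (k x) (f x) with h | h <;> constructor <;> linarith
    have e : ν k = ν (lmin k f) + ν (k - lmin k f) := by rw [← map_add]; congr 1; abel
    rw [e]
    exact add_le_add (le_ppart ν _ _ h1) (le_ppart ν _ _ h2)
  · rw [← le_sub_iff_add_le]
    refine ppart_le ν _ hf _ fun k hk => ?_
    rw [le_sub_comm]
    refine ppart_le ν _ hg _ fun l hl => ?_
    rw [le_sub_iff_add_le, ← map_add]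
    exact le_ppart ν _ _ fun x =>
      ⟨add_nonneg (hl x).1 (hk x).1, by
        rw [aux_add, aux_add]; linarith [(hl x).2, (hk x).2]⟩

theorem ppart_smul_le (c : ℝ) (hc : 0 < c) (f : Linf G) (hf : ∀ x, 0 ≤ f x) :
    c * ppart ν f ≤ ppart ν (c • f) := by
  rw [mul_comm, ← le_div_iff₀ hc]
  refine ppart_le ν _ hf _ fun k hk => ?_
  rw [le_div_iff₀ hc, mul_comm, ← smul_eq_mul, ← map_smul]
  exact le_ppart ν _ _ fun x => ⟨mul_nonneg hc.le (hk x).1,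
    mul_le_mul_of_nonneg_left (hk x).2 hc.le⟩

theorem ppart_zero : ppart ν 0 = 0 := by
  have := ppart_add ν 0 0 (fun _ => le_rfl) (fun _ => le_rfl)
  rw [add_zero] at this
  linarith

theorem ppart_smul (c : ℝ) (hc : 0 ≤ c) (f : Linf G) (hf : ∀ x, 0 ≤ f x) :
    ppart ν (c • f) = c * ppart ν f := by
  rcases hc.eq_or_lt with rfl | hc
  · rw [zero_smul, zero_mul, ppart_zero]
  · refine le_antisymm ?_ (ppart_smul_le ν c hc f hf)
    have h := ppart_smul_le ν c⁻¹ (inv_pos.2 hc) (c • f) (fun x => mul_nonneg hc.le (hf x))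
    rw [smul_smul, inv_mul_cancel₀ hc.ne', one_smul, inv_mul_le_iff₀ hc] at h
    exact h

theorem ppart_bound (f : Linf G) (hf : ∀ x, 0 ≤ f x) : ppart ν f ≤ ‖ν‖ * ‖f‖ :=
  ppart_le ν f hf _ (lint_bound ν f)

/-- Extension of the positive part to the whole space. -/
def pext (f : Linf G) : ℝ := ppart ν (f + ‖f‖ • lone G) - ppart ν (‖f‖ • lone G)

theorem pext_pos1 (f : Linf G) (x : G) : 0 ≤ (f + ‖f‖ • lone G) x := by
  rw [aux_add, aux_smul, aux_lone]
  linarith [neg_abs_le (f x), aux_abs_le f x]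

theorem pext_pos2 (f : Linf G) (x : G) : 0 ≤ (‖f‖ • lone G) x := by
  rw [aux_smul, aux_lone, mul_one]
  exact norm_nonneg f

theorem pext_eq (f a b : Linf G) (ha : ∀ x, 0 ≤ a x) (hb : ∀ x, 0 ≤ b x) (h : f = a - b) :
    pext ν f = ppart ν a - ppart ν b := by
  have h1 := ppart_add ν _ b (pext_pos1 f) hb
  have h2 := ppart_add ν a _ ha (pext_pos2 f)
  have e : f + ‖f‖ • lone G + b = a + ‖f‖ • lone G := by
    generalize ‖f‖ • lone G = u
    rw [h]; abel
  rw [e] at h1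
  unfold pext
  linarith

theorem pext_add (f g : Linf G) : pext ν (f + g) = pext ν f + pext ν g := by
  rw [pext_eq ν (f + g) ((f + ‖f‖ • lone G) + (g + ‖g‖ • lone G))
    (‖f‖ • lone G + ‖g‖ • lone G) (fun x => add_nonneg (pext_pos1 f x) (pext_pos1 g x))
    (fun x => add_nonneg (pext_pos2 f x) (pext_pos2 g x)) (by abel),
    ppart_add ν _ _ (pext_pos1 f) (pext_pos1 g), ppart_add ν _ _ (pext_pos2 f) (pext_pos2 g)]
  unfold pext
  ring

theorem pext_smul (c : ℝ) (f : Linf G) : pext ν (c • f) = c * pext ν f := by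
  have key : ∀ c : ℝ, 0 ≤ c → ∀ f : Linf G, pext ν (c • f) = c * pext ν f := by
    intro c hc f
    rw [pext_eq ν (c • f) (c • (f + ‖f‖ • lone G)) (c • (‖f‖ • lone G))
      (fun x => mul_nonneg hc (pext_pos1 f x)) (fun x => mul_nonneg hc (pext_pos2 f x))
      (by rw [← smul_sub]; congr 1; abel), ppart_smul ν c hc _ (pext_pos1 f),
      ppart_smul ν c hc _ (pext_pos2 f)]
    unfold pext
    ring
  rcases le_total 0 c with hc | hc
  · exact key c hc f
  · have h := key (-c) (neg_nonneg.2 hc) f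
    have h0 := pext_add ν (c • f) ((-c) • f)
    rw [← add_smul, add_neg_cancel, key 0 le_rfl, h] at h0
    linarith

theorem pext_of_nonneg (f : Linf G) (hf : ∀ x, 0 ≤ f x) : pext ν f = ppart ν f := by
  rw [pext_eq ν f f 0 hf (fun _ => le_rfl) (by simp), ppart_zero, sub_zero]

theorem norm_lone_le : ‖lone G‖ ≤ 1 :=
  aux_norm_le zero_le_one fun x => by rw [aux_lone, abs_one]

/-- The positive part as a continuous linear functional. -/
def pclm : Linf G →L[ℝ] ℝ :=
  LinearMap.mkContinuous
    { toFun := pext ν, map_add' := pext_add ν, map_smul' := pext_smul ν } (‖ν‖ * 2)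
    (fun f => by
      have a1 := ppart_bound ν _ (pext_pos1 f)
      have a2 := ppart_bound ν _ (pext_pos2 f)
      have b1 := ppart_nonneg ν _ (pext_pos1 f)
      have b2 := ppart_nonneg ν _ (pext_pos2 f)
      have c2 : ‖‖f‖ • lone G‖ ≤ ‖f‖ := by
        rw [norm_smul, norm_norm]
        exact mul_le_of_le_one_right (norm_nonneg _) norm_lone_le
      have c1 : ‖f + ‖f‖ • lone G‖ ≤ 2 * ‖f‖ := (norm_add_le _ _).trans (by linarith)
      have d1 := mul_le_mul_of_nonneg_left c1 (norm_nonneg ν)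
      have d2 := mul_le_mul_of_nonneg_left c2 (norm_nonneg ν)
      have d3 : 0 ≤ ‖ν‖ * ‖f‖ := by positivity
      change |ppart ν (f + ‖f‖ • lone G) - ppart ν (‖f‖ • lone G)| ≤ _
      rw [abs_le]
      constructor <;> linarith)

theorem pclm_apply (f : Linf G) : pclm ν f = pext ν f := rfl

theorem ppart_inv_le [Group G] (hν : ∀ (g : G) (f : Linf G), ν (ltrans g f) = ν f)
    (g : G) (f : Linf G) (hf : ∀ x, 0 ≤ f x) : ppart ν f ≤ ppart ν (ltrans g f) := by
  refine ppart_le ν f hf _ fun k hk => ?_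
  rw [← hν g k]
  exact le_ppart ν _ _ fun x => hk (g⁻¹ * x)

theorem ltrans_ltrans_inv [Group G] (g : G) (f : Linf G) : ltrans g⁻¹ (ltrans g f) = f :=
  aux_ext fun x => by rw [aux_ltrans, aux_ltrans, inv_inv, inv_mul_cancel_left]

theorem ppart_inv [Group G] (hν : ∀ (g : G) (f : Linf G), ν (ltrans g f) = ν f)
    (g : G) (f : Linf G) (hf : ∀ x, 0 ≤ f x) : ppart ν (ltrans g f) = ppart ν f := by
  refine le_antisymm ?_ (ppart_inv_le ν hν g f hf)
  have h := ppart_inv_le ν hν g⁻¹ (ltrans g f) (fun x => hf (g⁻¹ * x))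
  rwa [ltrans_ltrans_inv] at h

theorem pext_inv [Group G] (hν : ∀ (g : G) (f : Linf G), ν (ltrans g f) = ν f)
    (g : G) (f : Linf G) : pext ν (ltrans g f) = pext ν f := by
  rw [pext_eq ν (ltrans g f) (ltrans g (f + ‖f‖ • lone G)) (ltrans g (‖f‖ • lone G))
    (fun x => pext_pos1 f (g⁻¹ * x)) (fun x => pext_pos2 f (g⁻¹ * x))
    (aux_ext fun x => by simp only [aux_sub, aux_ltrans, aux_add, add_sub_cancel_right]),
    ppart_inv ν hν g _ (pext_pos1 f), ppart_inv ν hν g _ (pext_pos2 f)]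
  rfl

/-- A positive functional of norm one maps the constant function one to one. -/
theorem mean_lone (μ : Linf G →L[ℝ] ℝ) (hp : ∀ f : Linf G, (∀ h : G, 0 ≤ f h) → 0 ≤ μ f)
    (hn : ‖μ‖ = 1) : μ (lone G) = 1 := by
  apply le_antisymm
  · have h := (le_abs_self _).trans (μ.le_opNorm (lone G))
    rw [hn, one_mul] at h
    exact h.trans norm_lone_le
  · rw [← hn]
    refine μ.opNorm_le_bound (hp _ fun x => zero_le_one) fun f => ?_
    have h1 := hp (‖f‖ • lone G - f) fun x => by
      rw [aux_sub, aux_smul, aux_lone]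
      linarith [le_abs_self (f x), aux_abs_le f x]
    have h2 := hp (f + ‖f‖ • lone G) (pext_pos1 f)
    rw [map_sub, map_smul, smul_eq_mul] at h1
    rw [map_add, map_smul, smul_eq_mul] at h2
    rw [Real.norm_eq_abs, abs_le]
    constructor <;> linarith

end

/-- A countable discrete group `G` is amenable if and only if there exists a continuous
linear functional `m` on `ℓ∞(G)/ℝ` with `m([h ↦ f(gh)] − [f]) = f(g) − f(e)` for all
`g ∈ G`, `f ∈ ℓ∞(G)`; i.e. the Johnson class vanishes in `H¹(G, (ℓ∞(G)/ℝ)*)`. -/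
theorem amenable_iff_johnson_class_vanishes
    (G : Type*) [Group G] [Countable G] :
    (∃ μ : Linf G →L[ℝ] ℝ,
        (∀ f : Linf G, (∀ h : G, 0 ≤ f h) → 0 ≤ μ f) ∧ ‖μ‖ = 1 ∧
        (∀ (g : G) (f : Linf G), μ (ltrans g f) = μ f)) ↔
      (∃ m : (Linf G ⧸ Consts G) →L[ℝ] ℝ,
        ∀ (g : G) (f : Linf G),
          m (Submodule.Quotient.mk (rt g f) - Submodule.Quotient.mk f) = f g - f 1) := by
  constructor
  · rintro ⟨μ, hp, hn, hinv⟩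
    have h1 := mean_lone μ hp hn
    have hk : Consts G ≤ (levl (1 : G) - μ).ker := by
      rw [Consts, Submodule.span_le, Set.singleton_subset_iff]
      change (levl (1 : G) - μ) (lone G) = 0
      rw [ContinuousLinearMap.sub_apply, levl_apply, aux_lone, h1, sub_self]
    refine ⟨(Consts G).liftQL (levl (1 : G) - μ) hk, fun g f => ?_⟩
    have e : rt g f = ltrans g⁻¹ f :=
      aux_ext fun x => by rw [aux_rt, aux_ltrans, inv_inv]
    rw [map_sub]
    change (levl (1 : G) (rt g f) - μ (rt g f)) - (levl (1 : G) f - μ f) = _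
    rw [levl_apply, levl_apply, aux_rt, mul_one, e, hinv]
    ring
  · rintro ⟨m, hm⟩
    let ν : Linf G →L[ℝ] ℝ := levl (1 : G) - m.comp (Consts G).mkQL
    have hνa : ∀ f, ν f = f 1 - m (Submodule.Quotient.mk f) := fun _ => rfl
    have hν : ∀ (g : G) (f : Linf G), ν (ltrans g f) = ν f := by
      intro g f
      have e : ltrans g f = rt g⁻¹ f := rfl
      have h := hm g⁻¹ f
      rw [map_sub] at h
      rw [hνa, hνa, e, aux_rt, mul_one]
      linarith
    have h1 : ν (lone G) = 1 := by
      have : (Submodule.Quotient.mk (lone G) : Linf G ⧸ Consts G) = 0 :=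
        (Submodule.Quotient.mk_eq_zero _).2 (Submodule.subset_span rfl)
      rw [hνa, this, map_zero, aux_lone, sub_zero]
    have hT : 1 ≤ pclm ν (lone G) := by
      rw [pclm_apply, pext_of_nonneg ν _ (fun x => zero_le_one), ← h1]
      exact le_ppart ν _ _ fun x => ⟨zero_le_one, le_rfl⟩
    have hn : ‖pclm ν‖ ≠ 0 := by
      intro h0
      rw [norm_eq_zero.1 h0, ContinuousLinearMap.zero_apply] at hT
      linarith
    refine ⟨‖pclm ν‖⁻¹ • pclm ν, fun f hf => ?_, ?_, fun g f => ?_⟩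
    · rw [ContinuousLinearMap.smul_apply, smul_eq_mul, pclm_apply, pext_of_nonneg ν f hf]
      exact mul_nonneg (inv_nonneg.2 (norm_nonneg _)) (ppart_nonneg ν f hf)
    · rw [norm_smul, norm_inv, norm_norm, inv_mul_cancel₀ hn]
    · rw [ContinuousLinearMap.smul_apply, ContinuousLinearMap.smul_apply, pclm_apply,
        pclm_apply, pext_inv ν hν]
end
end

section
/- Let G be a countable discrete group. If the constant function 1 does not lie in the linear span of {g·f − f : g ∈ G, f ∈ ℓ∞(G)} inside ℓ∞(G), then G admits a left-invariant mean, i.e. G is amenable. (This is the implication from non-vanishing of the Block–Weinberger fundamental class to amenability, proved via Nowak's argument using Reiter sequences.) -/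
noncomputable section
open scoped ENNReal

/-- Left translation as a linear map. -/
def ltransL {G : Type*} [Group G] (g : G) : Linf G →ₗ[ℝ] Linf G where
  toFun := ltrans g
  map_add' := fun x y => by ext h; rfl
  map_smul' := fun c x => by ext h; rfl

/-- The `ℓ¹` norm of a finitely supported function. -/
def nrm1 {G : Type*} (b : G →₀ ℝ) : ℝ := ∑' h, |b h|

lemma summable_fs {G : Type*} (b : G →₀ ℝ) (u : ℝ → G → ℝ) (hu : ∀ h, u 0 h = 0) :
    Summable (fun h => u (b h) h) := by
  apply summable_of_hasFiniteSupport
  apply b.hasFiniteSupport.subset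
  intro h hh hb
  apply hh
  change u (b h) h = 0
  rw [hb, hu]

lemma summable_abs_fs {G : Type*} (b : G →₀ ℝ) : Summable (fun h => |b h|) :=
  summable_fs b (fun r _ => |r|) (by simp)

lemma nrm1_add {G : Type*} (b c : G →₀ ℝ) : nrm1 (b + c) ≤ nrm1 b + nrm1 c := by
  unfold nrm1
  rw [← (summable_abs_fs b).tsum_add (summable_abs_fs c)]
  exact (summable_abs_fs _).tsum_le_tsum (fun h => abs_add_le _ _)
    ((summable_abs_fs b).add (summable_abs_fs c))

lemma nrm1_smul {G : Type*} (r : ℝ) (hr : 0 < r) (b : G →₀ ℝ) :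
    nrm1 (r • b) = r * nrm1 b := by
  unfold nrm1
  rw [← tsum_mul_left]
  congr 1; ext h
  simp [abs_mul, abs_of_pos hr]

lemma nrm1_single {G : Type*} (h : G) (r : ℝ) : nrm1 (Finsupp.single h r) = |r| := by
  unfold nrm1
  rw [tsum_eq_single h]
  · simp
  · intro k hk
    simp [Finsupp.single_apply, hk.symm]

/-- The difference operator on finitely supported functions. -/
def dOp {G : Type*} [Group G] (g : G) : (G →₀ ℝ) →ₗ[ℝ] (G →₀ ℝ) :=
  (Finsupp.domLCongr (Equiv.mulLeft g⁻¹)).toLinearMap - LinearMap.id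

lemma dOp_apply {G : Type*} [Group G] (g : G) (a : G →₀ ℝ) (k : G) :
    dOp g a k = a (g * k) - a k := by
  simp [dOp, Finsupp.equivMapDomain_apply]

lemma dOp_single {G : Type*} [Group G] (g h : G) :
    dOp g (Finsupp.single h (1:ℝ)) = Finsupp.single (g⁻¹ * h) 1 - Finsupp.single h 1 := by
  simp [dOp, Finsupp.domLCongr_single]

lemma Linf_abs_le {G : Type*} (f : Linf G) (h : G) : |f h| ≤ ‖f‖ :=
  lp.norm_apply_le_norm ENNReal.top_ne_zero f h

lemma pair_bound {G : Type*} [Group G] (g : G) (f : Linf G) (a : G →₀ ℝ) :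
    ∑' h, |a h| * (f (g⁻¹ * h) - f h) ≤ ‖f‖ * nrm1 (dOp g a) := by
  have s1 : Summable (fun h => |a h| * f (g⁻¹ * h)) :=
    summable_fs a (fun r h => |r| * f (g⁻¹ * h)) (by simp)
  have s2 : Summable (fun h => |a h| * f h) :=
    summable_fs a (fun r h => |r| * f h) (by simp)
  have s3 : Summable (fun h => |a (g * h)| * f h) := by
    have := (Equiv.mulLeft g).summable_iff.mpr s1
    simpa [Function.comp_def] using this
  have e : ∑' h, |a h| * f (g⁻¹ * h) = ∑' h, |a (g * h)| * f h := by
    rw [← (Equiv.mulLeft g).tsum_eq]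
    simp
  simp only [mul_sub]
  rw [s1.tsum_sub s2, e, ← s3.tsum_sub s2, nrm1, ← tsum_mul_left]
  refine (s3.sub s2).tsum_le_tsum (fun h => ?_) ((summable_abs_fs _).mul_left _)
  rw [dOp_apply, ← sub_mul, mul_comm ‖f‖]
  calc _ ≤ |(|a (g * h)| - |a h|) * f h| := le_abs_self _
    _ = |(|a (g * h)| - |a h|)| * |f h| := abs_mul _ _
    _ ≤ _ := mul_le_mul (abs_abs_sub_abs_le_abs_sub _ _) (Linf_abs_le f h) (abs_nonneg _)
      (abs_nonneg _)

lemma one_mem_aux {G : Type*} [Group G] {ι : Type*} [Fintype ι] [DecidableEq ι]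
    (g : ι → G) (F : ι → Linf G)
    (hv : ∀ h, 1 ≤ ∑ i, (F i ((g i)⁻¹ * h) - F i h)) :
    ∃ F' : ι → Linf G, lone G = ∑ i, (ltrans (g i) (F' i) - F' i) := by
  let p : (ι → (G →₀ ℝ)) → ℝ := fun x => ∑ i, ‖F i‖ * nrm1 (x i)
  let D : (G →₀ ℝ) →ₗ[ℝ] (ι → (G →₀ ℝ)) := LinearMap.pi fun i => dOp (g i)
  have key : ∀ a, nrm1 a ≤ p (D a) := by
    intro a
    have s : ∀ i, Summable (fun h => |a h| * (F i ((g i)⁻¹ * h) - F i h)) := fun i =>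
      summable_fs a (fun r h => |r| * (F i ((g i)⁻¹ * h) - F i h)) (by simp)
    calc nrm1 a ≤ ∑' h, ∑ i, |a h| * (F i ((g i)⁻¹ * h) - F i h) := by
          refine (summable_abs_fs a).tsum_le_tsum (fun h => ?_) (summable_sum fun i _ => s i)
          rw [← Finset.mul_sum]
          exact le_mul_of_one_le_right (abs_nonneg _) (hv h)
      _ = ∑ i, ∑' h, |a h| * (F i ((g i)⁻¹ * h) - F i h) :=
          Summable.tsum_finsetSum fun i _ => s i
      _ ≤ p (D a) := Finset.sum_le_sum fun i _ => pair_bound (g i) (F i) a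
  have p0 : p 0 = 0 := by simp [p, nrm1]
  have hinj : Function.Injective D := by
    rw [injective_iff_map_eq_zero]
    intro a ha
    have h1 := key a
    rw [ha, p0] at h1
    ext h
    have h2 : |a h| ≤ nrm1 a := (summable_abs_fs a).le_tsum h (fun _ _ => abs_nonneg _)
    exact abs_nonpos_iff.mp (h2.trans h1)
  let tot : (G →₀ ℝ) →ₗ[ℝ] ℝ := Finsupp.lsum ℝ fun _ => LinearMap.id
  have htot : ∀ a, tot a ≤ nrm1 a := by
    intro a
    have : nrm1 a = a.sum fun _ r => |r| := by
      unfold nrm1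
      rw [tsum_eq_sum (s := a.support)]
      · rfl
      · intro h hh; simpa using hh
    rw [this]
    exact Finset.sum_le_sum fun i _ => le_abs_self _
  let e := LinearEquiv.ofInjective D hinj
  let q : (ι → (G →₀ ℝ)) →ₗ.[ℝ] ℝ := ⟨LinearMap.range D, tot ∘ₗ e.symm.toLinearMap⟩
  obtain ⟨φ, hφ, hp⟩ := exists_extension_of_le_sublinear q p
    (by
      intro c hc x
      simp only [p, Finset.mul_sum, Pi.smul_apply, nrm1_smul c hc]
      exact Finset.sum_congr rfl fun i _ => by ring)
    (by
      intro x y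
      simp only [p, ← Finset.sum_add_distrib, ← mul_add, Pi.add_apply]
      exact Finset.sum_le_sum fun i _ => mul_le_mul_of_nonneg_left (nrm1_add _ _) (norm_nonneg _))
    (by
      intro x
      obtain ⟨a, rfl⟩ := e.surjective x
      have : q (e a) = tot a := by
        change tot (e.symm (e a)) = tot a
        rw [e.symm_apply_apply]
      rw [this]
      exact (htot a).trans (key a))
  have hφD : ∀ a, φ (D a) = tot a := by
    intro a
    have := hφ (e a)
    change φ (D a) = tot (e.symm (e a)) at this
    rwa [e.symm_apply_apply] at this
  have hps : ∀ i h (r : ℝ), p (Pi.single i (Finsupp.single h r)) = ‖F i‖ * |r| := by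
    intro i h r
    simp only [p]
    rw [Finset.sum_eq_single i]
    · simp [nrm1_single]
    · intro j _ hj
      simp [Pi.single_eq_of_ne hj, nrm1]
    · simp
  have hb : ∀ i h, |φ (Pi.single i (Finsupp.single h 1))| ≤ ‖F i‖ := by
    intro i h
    rw [abs_le']
    constructor
    · have := hp (Pi.single i (Finsupp.single h 1))
      rw [hps] at this
      simpa using this
    · have := hp (Pi.single i (Finsupp.single h (-1)))
      rw [hps, Finsupp.single_neg, Pi.single_neg, map_neg] at this
      simpa using this
  refine ⟨fun i => ⟨fun h => φ (Pi.single i (Finsupp.single h 1)), memℓp_infty ⟨‖F i‖, ?_⟩⟩, ?_⟩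
  · rintro x ⟨h, rfl⟩
    exact hb i h
  · ext h
    have h1 := hφD (Finsupp.single h 1)
    rw [← Finset.univ_sum_single (D (Finsupp.single h 1)), map_sum] at h1
    have h2 : tot (Finsupp.single h 1) = 1 := by simp [tot]
    rw [h2] at h1
    rw [lp.coeFn_sum, Finset.sum_apply]
    change (1 : ℝ) = _
    refine h1.symm.trans ?_
    refine Finset.sum_congr rfl fun i _ => ?_
    change φ (Pi.single i (dOp (g i) (Finsupp.single h 1))) = _
    rw [dOp_single, Pi.single_sub, map_sub]
    rfl

/-- If `1` is not in the span of coboundaries, no coboundary is `≥ 1`. -/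
lemma not_ge_one {G : Type*} [Group G]
    (h : lone G ∉ Submodule.span ℝ
        {x : Linf G | ∃ (g : G) (f : Linf G), x = ltrans g f - f})
    (v : Linf G) (hv : v ∈ Submodule.span ℝ
        {x : Linf G | ∃ (g : G) (f : Linf G), x = ltrans g f - f}) :
    ¬ ∀ k, 1 ≤ v k := by
  classical
  intro h1
  apply h
  let L : (G →₀ Linf G) →ₗ[ℝ] Linf G := Finsupp.lsum ℝ fun g => ltransL g - LinearMap.id
  have hL : Submodule.span ℝ {x : Linf G | ∃ (g : G) (f : Linf G), x = ltrans g f - f}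
      ≤ LinearMap.range L := by
    rw [Submodule.span_le]
    rintro x ⟨g, f, rfl⟩
    refine ⟨Finsupp.single g f, ?_⟩
    exact Finsupp.sum_single_index (map_zero _)
  obtain ⟨F, rfl⟩ := hL hv
  obtain ⟨F', hF'⟩ := one_mem_aux (fun i : F.support => (i : G)) (fun i => F i) (by
    intro k
    refine (h1 k).trans (le_of_eq ?_)
    have : L F = ∑ i ∈ F.support, (ltrans i (F i) - F i) := rfl
    rw [this, ← Finset.sum_coe_sort, lp.coeFn_sum, Finset.sum_apply]
    rfl)
  rw [hF']
  exact Submodule.sum_mem _ fun i _ => Submodule.subset_span ⟨_, _, rfl⟩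

/-- If `1` does not lie in the span of coboundaries, then `G` admits a left-invariant mean. -/
theorem amenable_of_one_not_in_span_of_coboundaries
    (G : Type*) [Group G] [Countable G]
    (h : lone G ∉ Submodule.span ℝ
        {x : Linf G | ∃ (g : G) (f : Linf G), x = ltrans g f - f}) :
    ∃ μ : Linf G →L[ℝ] ℝ,
      (∀ f : Linf G, (∀ h : G, 0 ≤ f h) → 0 ≤ μ f) ∧ ‖μ‖ = 1 ∧
      (∀ (g : G) (f : Linf G), μ (ltrans g f) = μ f) := by
  set V := Submodule.span ℝ {x : Linf G | ∃ (g : G) (f : Linf G), x = ltrans g f - f} with hV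
  have hbdd : ∀ f : Linf G, BddAbove (Set.range fun k => f k) := fun f =>
    ⟨‖f‖, by rintro _ ⟨k, rfl⟩; exact (le_abs_self _).trans (Linf_abs_le f k)⟩
  let q : Linf G →ₗ.[ℝ] ℝ := ⟨V, 0⟩
  obtain ⟨φ, hφ, hp⟩ := exists_extension_of_le_sublinear q (fun f => ⨆ k, f k)
    (by
      intro c hc x
      simp only [lp.coeFn_smul, Pi.smul_apply, smul_eq_mul]
      exact (Real.mul_iSup_of_nonneg hc.le _).symm)
    (by
      intro x y
      refine ciSup_le fun k => ?_
      exact add_le_add (le_ciSup (hbdd x) k) (le_ciSup (hbdd y) k))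
    (by
      rintro ⟨v, hv⟩
      change (0:ℝ) ≤ ⨆ k, v k
      by_contra! hlt
      set s := ⨆ k, v k with hs
      refine not_ge_one h (s⁻¹ • v) (V.smul_mem _ hv) fun k => ?_
      have hk : v k ≤ s := le_ciSup (hbdd v) k
      change 1 ≤ s⁻¹ * v k
      rw [inv_mul_eq_div, one_le_div_of_neg hlt]
      exact hk)
  have hub : ∀ (f : Linf G) (c : ℝ), (∀ k, f k ≤ c) → φ f ≤ c := fun f c hc =>
    (hp f).trans (ciSup_le hc)
  have hbound : ∀ f : Linf G, ‖φ f‖ ≤ 1 * ‖f‖ := by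
    intro f
    rw [one_mul, Real.norm_eq_abs, abs_le']
    refine ⟨hub f _ fun k => (le_abs_self _).trans (Linf_abs_le f k), ?_⟩
    rw [← map_neg]
    exact hub _ _ fun k => (neg_le_abs (f k)).trans (Linf_abs_le f k)
  refine ⟨φ.mkContinuous 1 hbound, ?_, ?_, ?_⟩
  · intro f hf
    have : φ (-f) ≤ 0 := hub _ _ fun k => neg_nonpos.mpr (hf k)
    rw [map_neg] at this
    change 0 ≤ φ f
    linarith
  · apply le_antisymm (φ.mkContinuous_norm_le zero_le_one hbound)
    have h1 : φ (-lone G) ≤ -1 := hub _ _ fun k => le_refl (-1 : ℝ)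
    rw [map_neg] at h1
    have h2 : ‖lone G‖ ≤ 1 := by
      refine lp.norm_le_of_forall_le zero_le_one fun k => ?_
      change ‖(1:ℝ)‖ ≤ 1
      simp
    have h3 := (φ.mkContinuous 1 hbound).le_opNorm (lone G)
    have h4 : φ (lone G) ≤ ‖φ.mkContinuous 1 hbound (lone G)‖ := le_abs_self _
    have h5 := mul_le_mul_of_nonneg_left h2 (norm_nonneg (φ.mkContinuous 1 hbound))
    linarith
  · intro g f
    have h1 := hφ ⟨ltrans g f - f, Submodule.subset_span ⟨g, f, rfl⟩⟩
    change φ (ltrans g f - f) = 0 at h1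
    rw [map_sub] at h1
    exact sub_eq_zero.mp h1
end
end
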